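/- arXiv:0912.4653 — 2 statements merged into one kernel-verified Lean document; each statement's English description precedes it below -/
import Mathlib

section
/- Let Ω ⊂ ℝⁿ be a smoothly bounded convex domain. Then the signed distance function δ is convex on a neighborhood U of bΩ: H_δ(ξ,ξ)(x) ≥ 0 for all x ∈ U and all ξ ∈ ℝⁿ. Moreover, for x outside Ω̄ in U one has H_δ(ξ,ξ)(x) ≥ (1/2)H_δ(ξ,ξ)(b(x)). -/
open RealInnerProductSpace Metric Bornology

noncomputable abbrev E (n : ℕ) := EuclideanSpace ℝ (Fin n)

/-- The real Hessian bilinear form `H_f(ξ,ζ)(x)` of a function `f` at `x`. -/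
noncomputable def Hess {F : Type*} [NormedAddCommGroup F] [NormedSpace ℝ F]
    (f : F → ℝ) (x ξ ζ : F) : ℝ :=
  fderiv ℝ (fun y => fderiv ℝ f y ζ) x ξ

open Filter Topology Set

section

variable {V : Type*} [NormedAddCommGroup V] [InnerProductSpace ℝ V]

/-- A smooth map with invertible derivative at `a` has a local left inverse which is smooth on a
whole neighbourhood of `f a`. -/
theorem exists_smooth_local_left_inverse {X Y : Type*} [NormedAddCommGroup X] [NormedSpace ℝ X]
    [CompleteSpace X] [NormedAddCommGroup Y] [NormedSpace ℝ Y] {f : X → Y} {a : X} (f' : X ≃L[ℝ] Y)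
    (hf : ∀ᶠ w in 𝓝 a, ContDiffAt ℝ (⊤ : ℕ∞) f w) (hf' : HasFDerivAt f (f' : X →L[ℝ] Y) a) :
    ∃ g : Y → X, (∀ᶠ z in 𝓝 (f a), ContDiffAt ℝ (⊤ : ℕ∞) g z) ∧ ∀ᶠ w in 𝓝 a, g (f w) = w := by
  have hfa : ContDiffAt ℝ (⊤ : ℕ∞) f a := hf.self_of_nhds
  have htop : ((⊤ : ℕ∞) : WithTop ℕ∞) ≠ 0 := by simp
  set φ := hfa.toOpenPartialHomeomorph f hf' htop
  have ha : a ∈ φ.source := hfa.mem_toOpenPartialHomeomorph_source hf' htop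
  have hta : f a ∈ φ.target := φ.map_source ha
  have hsymm : φ.symm (f a) = a := φ.left_inv ha
  refine ⟨φ.symm, ?_, ?_⟩
  · have hcont : ContinuousAt (fderiv ℝ f) a :=
      (hfa.fderiv_right (m := 0) (by simp)).continuousAt
    have hinv : ∀ᶠ w in 𝓝 a, fderiv ℝ f w ∈ range ((↑) : (X ≃L[ℝ] Y) → X →L[ℝ] Y) := by
      apply hcont
      rw [hf'.fderiv]
      exact ContinuousLinearEquiv.nhds f'
    have hsc : Tendsto φ.symm (𝓝 (f a)) (𝓝 a) := by
      have := φ.continuousAt_symm hta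
      rwa [ContinuousAt, hsymm] at this
    filter_upwards [φ.open_target.mem_nhds hta, hsc.eventually hinv, hsc.eventually hf]
      with z hz hi hd
    obtain ⟨L, hL⟩ := hi
    refine φ.contDiffAt_symm (f₀' := L) hz ?_ hd
    rw [hL]
    exact (hd.differentiableAt htop).hasFDerivAt
  · filter_upwards [φ.open_source.mem_nhds ha] with w hw
    exact φ.left_inv hw

theorem hess_eq_fderiv_fderiv {r : V → ℝ} (hr : ContDiff ℝ (⊤ : ℕ∞) r) (q u v : V) :
    Hess r q u v = fderiv ℝ (fderiv ℝ r) q u v := by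
  have hd : DifferentiableAt ℝ (fderiv ℝ r) q :=
    ((hr.fderiv_right (m := (⊤ : ℕ∞)) (by simp)).differentiable (by simp)) q
  rw [Hess, (hd.hasFDerivAt.clm_apply (hasFDerivAt_const v q)).fderiv]
  simp

theorem hess_symm {r : V → ℝ} (hr : ContDiff ℝ (⊤ : ℕ∞) r) (q u v : V) :
    Hess r q u v = Hess r q v u := by
  rw [hess_eq_fderiv_fderiv hr, hess_eq_fderiv_fderiv hr]
  exact hr.contDiffAt.isSymmSndFDerivAt
    (by simpa using WithTop.coe_le_coe.2 (le_top : (2 : ℕ∞) ≤ ⊤)) u v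

variable [CompleteSpace V]

/-- The normalized gradient of `r`. -/
noncomputable def unitNormal (r : V → ℝ) (y : V) : V := ‖gradient r y‖⁻¹ • gradient r y

theorem ContDiff.gradient {r : V → ℝ} (hr : ContDiff ℝ (⊤ : ℕ∞) r) :
    ContDiff ℝ (⊤ : ℕ∞) (gradient r) :=
  (InnerProductSpace.toDual ℝ V).symm.contDiff.comp
    (hr.fderiv_right (m := (⊤ : ℕ∞)) (by simp))

theorem contDiffAt_unitNormal {r : V → ℝ} (hr : ContDiff ℝ (⊤ : ℕ∞) r) {y : V}
    (hy : gradient r y ≠ 0) : ContDiffAt ℝ (⊤ : ℕ∞) (unitNormal r) y := by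
  have hg := hr.gradient.contDiffAt (x := y)
  exact ((hg.norm ℝ hy).inv (norm_ne_zero_iff.2 hy)).smul hg

theorem norm_unitNormal {r : V → ℝ} {y : V} (hy : gradient r y ≠ 0) : ‖unitNormal r y‖ = 1 := by
  rw [unitNormal, norm_smul, norm_inv, norm_norm, inv_mul_cancel₀ (norm_ne_zero_iff.2 hy)]

theorem gradient_eq_norm_smul_unitNormal (r : V → ℝ) (y : V) :
    gradient r y = ‖gradient r y‖ • unitNormal r y := by
  by_cases hy : gradient r y = 0
  · simp [hy]
  · rw [unitNormal, smul_inv_smul₀ (norm_ne_zero_iff.2 hy)]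

theorem fderiv_apply_eq_norm_mul_inner (r : V → ℝ) (y v : V) :
    fderiv ℝ r y v = ‖gradient r y‖ * ⟪unitNormal r y, v⟫ := by
  rw [← inner_gradient_left, gradient_eq_norm_smul_unitNormal r y, real_inner_smul_left,
    ← gradient_eq_norm_smul_unitNormal]

theorem eventually_gradient_ne_zero {r : V → ℝ} (hr : ContDiff ℝ (⊤ : ℕ∞) r) {y : V}
    (hy : gradient r y ≠ 0) : ∀ᶠ z in 𝓝 y, gradient r z ≠ 0 :=
  hr.gradient.continuous.continuousAt.eventually_ne hy

theorem inner_fderiv_unitNormal_unitNormal {r : V → ℝ} (hr : ContDiff ℝ (⊤ : ℕ∞) r) {q : V}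
    (hq : gradient r q ≠ 0) (u : V) : ⟪fderiv ℝ (unitNormal r) q u, unitNormal r q⟫ = 0 := by
  have hN := ((contDiffAt_unitNormal hr hq).differentiableAt (by simp)).hasFDerivAt
  have h1 : (fun y => ⟪unitNormal r y, unitNormal r y⟫) =ᶠ[𝓝 q] fun _ => (1 : ℝ) := by
    filter_upwards [eventually_gradient_ne_zero hr hq] with y hy
    rw [real_inner_self_eq_norm_sq, norm_unitNormal hy, one_pow]
  have h2 := (hN.inner ℝ hN).unique ((hasFDerivAt_const (1 : ℝ) q).congr_of_eventuallyEq h1)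
  have h3 := DFunLike.congr_fun h2 u
  simp only [ContinuousLinearMap.comp_apply, ContinuousLinearMap.prod_apply, fderivInnerCLM_apply,
    zero_apply] at h3
  rw [real_inner_comm] at h3
  linarith

/-- The shape operator, paired with a tangent vector, is the normalized Hessian. -/
theorem inner_fderiv_unitNormal_tangent {r : V → ℝ} (hr : ContDiff ℝ (⊤ : ℕ∞) r) {q : V}
    (hq : gradient r q ≠ 0) (u : V) {v : V} (hv : ⟪unitNormal r q, v⟫ = 0) :
    ⟪fderiv ℝ (unitNormal r) q u, v⟫ = ‖gradient r q‖⁻¹ * Hess r q u v := by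
  have hN := ((contDiffAt_unitNormal hr hq).differentiableAt (by simp)).hasFDerivAt
  have hg := hr.gradient.contDiffAt (x := q)
  have hc := (((hg.norm ℝ hq).inv (norm_ne_zero_iff.2 hq)).differentiableAt (by simp)).hasFDerivAt
  have hd : DifferentiableAt ℝ (fderiv ℝ r) q :=
    ((hr.fderiv_right (m := (⊤ : ℕ∞)) (by simp)).differentiable (by simp)) q
  have hdv := hd.hasFDerivAt.clm_apply (hasFDerivAt_const v q)
  have hfun : (fun y => ⟪unitNormal r y, v⟫) = fun y => ‖gradient r y‖⁻¹ * fderiv ℝ r y v := by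
    funext y
    rw [unitNormal, real_inner_smul_left, inner_gradient_left]
  have h1 := hN.inner ℝ (hasFDerivAt_const v q)
  have h2 := hc.mul hdv
  have hz : fderiv ℝ r q v = 0 := by rw [fderiv_apply_eq_norm_mul_inner, hv, mul_zero]
  rw [hfun] at h1
  have h3 := DFunLike.congr_fun (h1.unique h2) u
  simpa [fderivInnerCLM_apply, hz, hess_eq_fderiv_fderiv hr] using h3

theorem mem_frontier_of_gradient_ne_zero {r : V → ℝ} {Ω : Set V} (hΩ : IsOpen Ω)
    (hdef : Ω = {x | r x < 0}) {z : V} (hz : r z = 0) (hgz : gradient r z ≠ 0) :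
    z ∈ frontier Ω := by
  rw [hΩ.frontier_eq]
  refine ⟨?_, by simp [hdef, hz]⟩
  by_contra hcl
  have hmin : IsLocalMin r z := by
    filter_upwards [isClosed_closure.isOpen_compl.mem_nhds hcl] with w hw
    rw [hz]
    by_contra hlt
    exact hw (subset_closure (by rw [hdef]; exact not_le.1 hlt))
  apply hgz
  rw [gradient, hmin.fderiv_eq_zero, map_zero]

theorem eq_zero_of_mem_frontier {X : Type*} [TopologicalSpace X] {r : X → ℝ} {Ω : Set X}
    (hr : Continuous r) (hdef : Ω = {x | r x < 0}) {p : X} (hp : p ∈ frontier Ω) : r p = 0 := by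
  rw [hdef] at hp
  exact frontier_lt_subset_eq hr continuous_const hp

/-- At a nearest boundary point the displacement is normal to the boundary. -/
theorem exists_sub_eq_smul_unitNormal {r : V → ℝ} (hr : ContDiff ℝ (⊤ : ℕ∞) r) {Ω : Set V}
    (hΩ : IsOpen Ω) (hdef : Ω = {x | r x < 0}) {x y : V} (hy : y ∈ frontier Ω)
    (hgy : gradient r y ≠ 0) (hxy : dist x y = infDist x (frontier Ω)) :
    ∃ s : ℝ, x = y + s • unitNormal r y := by
  have hry := eq_zero_of_mem_frontier hr.continuous hdef hy
  have hmin : IsLocalMinOn (fun z => ‖z - x‖ ^ 2) {z | r z = r y} y := by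
    filter_upwards [mem_nhdsWithin_of_mem_nhds (eventually_gradient_ne_zero hr hgy),
      self_mem_nhdsWithin] with z hz hrz
    have hzf := mem_frontier_of_gradient_ne_zero hΩ hdef (hrz.trans hry) hz
    have := infDist_le_dist_of_mem (x := x) hzf
    rw [← hxy, dist_comm, dist_comm x z, dist_eq_norm, dist_eq_norm] at this
    gcongr
  have hφ : HasStrictFDerivAt (fun z => ‖z - x‖ ^ 2) (2 • innerSL ℝ (y - x)) y := by
    exact (hasStrictFDerivAt_norm_sq (y - x)).comp y ((hasStrictFDerivAt_id y).sub_const x)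
  obtain ⟨a, b, hab, h⟩ := IsLocalExtrOn.exists_multipliers_of_hasStrictFDerivAt_1d
    (Or.inl hmin) (hr.contDiffAt.hasStrictFDerivAt (by simp)) hφ
  have hvec : a • gradient r y + (b * 2) • (y - x) = 0 := by
    refine ext_inner_right ℝ fun v => ?_
    have hv := DFunLike.congr_fun h v
    simp at hv
    rw [inner_add_left, real_inner_smul_left, real_inner_smul_left, inner_gradient_left,
      inner_zero_left, inner_sub_left]
    linarith
  have hb : b ≠ 0 := by
    rintro rfl
    have ha : a ≠ 0 := by rintro rfl; simp at hab
    simp [ha, hgy] at hvec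
  refine ⟨(b * 2)⁻¹ * a * ‖gradient r y‖, ?_⟩
  rw [mul_smul, ← gradient_eq_norm_smul_unitNormal, mul_smul, eq_neg_of_add_eq_zero_left hvec,
    smul_neg, inv_smul_smul₀ (mul_ne_zero hb two_ne_zero)]
  abel

/-- Near a boundary point, `r` has the sign of the displacement along the normal. -/
theorem eventually_neg_iff_neg {r : V → ℝ} (hr : ContDiff ℝ (⊤ : ℕ∞) r) {p : V}
    (hgp : gradient r p ≠ 0) : ∀ᶠ q in 𝓝 (p, p), ∀ s : ℝ, r q.2 = 0 →
      q.1 = q.2 + s • unitNormal r q.2 → (r q.1 < 0 ↔ s < 0) := by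
  set c := ‖gradient r p‖
  have hcpos : 0 < c := norm_pos_iff.2 hgp
  have hst : HasStrictFDerivAt r (fderiv ℝ r p) p := hr.contDiffAt.hasStrictFDerivAt (by simp)
  have h1 := hst.isLittleO.def (c := c / 2) (by positivity)
  have hcont : ContinuousAt (fun q : V × V => fderiv ℝ r p (unitNormal r q.2)) (p, p) :=
    (fderiv ℝ r p).continuous.continuousAt.comp
      ((contDiffAt_unitNormal hr hgp).continuousAt.comp_of_eq continuousAt_snd rfl)
  have h2 : ∀ᶠ q in 𝓝 (p, p), c / 2 < fderiv ℝ r p (unitNormal r q.2) := by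
    apply hcont.eventually_const_lt
    dsimp only
    rw [fderiv_apply_eq_norm_mul_inner, real_inner_self_eq_norm_sq, norm_unitNormal hgp]
    linarith
  have h3 : ∀ᶠ q in 𝓝 (p, p), gradient r q.2 ≠ 0 :=
    continuousAt_snd.eventually (eventually_gradient_ne_zero hr hgp)
  filter_upwards [h1, h2, h3] with q hq1 hq2 hq3 s hs hqs
  have hsub : q.1 - q.2 = s • unitNormal r q.2 := by rw [hqs]; abel
  rw [hs, sub_zero, hsub, map_smul, norm_smul, norm_unitNormal hq3, mul_one, smul_eq_mul,
    Real.norm_eq_abs, Real.norm_eq_abs, abs_le] at hq1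
  constructor
  · intro hneg
    by_contra hge
    rw [abs_of_nonneg (not_lt.1 hge)] at hq1
    nlinarith [not_lt.1 hge]
  · intro hneg
    rw [abs_of_neg hneg] at hq1
    nlinarith

theorem eventually_forall_nearest {X : Type*} [PseudoMetricSpace X] {S : Set X} {p : X}
    (hp : p ∈ S) {P : X × X → Prop}
    (hP : ∀ᶠ q in 𝓝 (p, p), P q) :
    ∀ᶠ x in 𝓝 p, ∀ y ∈ S, dist x y = infDist x S → P (x, y) := by
  obtain ⟨ε, hε, hball⟩ := Metric.eventually_nhds_iff.1 hP
  filter_upwards [Metric.ball_mem_nhds p (half_pos hε)] with x hx y _ hxy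
  rw [Metric.mem_ball] at hx
  have h1 : dist x y ≤ dist x p := hxy ▸ infDist_le_dist_of_mem hp
  have h2 : dist y p ≤ dist y x + dist x p := dist_triangle _ _ _
  rw [dist_comm y x] at h2
  refine hball ?_
  rw [Prod.dist_eq]
  exact max_lt (by dsimp only; linarith) (by dsimp only; linarith)

open scoped Classical in
/-- `x ↦ δ x` is the normal coordinate relative to any nearest boundary point. -/
theorem eventually_eq_add_smul_unitNormal {r : V → ℝ} (hr : ContDiff ℝ (⊤ : ℕ∞) r) {Ω : Set V}
    (hΩ : IsOpen Ω) (hdef : Ω = {x | r x < 0}) {δ : V → ℝ}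
    (hsd : ∀ x, δ x = if x ∈ Ω then -infDist x (frontier Ω) else infDist x (frontier Ω))
    {p : V} (hp : p ∈ frontier Ω) (hgp : gradient r p ≠ 0) :
    ∀ᶠ x in 𝓝 p, ∀ y ∈ frontier Ω, dist x y = infDist x (frontier Ω) →
      x = y + δ x • unitNormal r y := by
  have h3 : ∀ᶠ q in 𝓝 (p, p), gradient r q.2 ≠ 0 :=
    continuousAt_snd.eventually (eventually_gradient_ne_zero hr hgp)
  filter_upwards [eventually_forall_nearest hp ((eventually_neg_iff_neg hr hgp).and h3)]
    with x hx y hy hxy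
  obtain ⟨hsign, hgy⟩ := hx y hy hxy
  obtain ⟨s, hs⟩ := exists_sub_eq_smul_unitNormal hr hΩ hdef hy hgy hxy
  have hiff := hsign s (eq_zero_of_mem_frontier hr.continuous hdef hy) hs
  have habs : infDist x (frontier Ω) = |s| := by
    rw [← hxy, dist_eq_norm]
    nth_rewrite 1 [hs]
    rw [add_sub_cancel_left, norm_smul, norm_unitNormal hgy, mul_one, Real.norm_eq_abs]
  have hδ : δ x = s := by
    rw [hsd, habs]
    split_ifs with hmem
    · rw [hdef] at hmem
      rw [abs_of_neg (hiff.1 hmem), neg_neg]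
    · rw [hdef] at hmem
      exact abs_of_nonneg (not_lt.1 fun h => hmem (hiff.2 h))
  rw [hδ]
  exact hs

/-- The derivative at `(p, 0)` of `(y, t) ↦ (y + t N(y), r y)`. -/
noncomputable def normalCoordEquiv (N : V) (hN : ‖N‖ = 1) (c : ℝ) (hc : c ≠ 0) :
    (V × ℝ) ≃L[ℝ] (V × ℝ) :=
  ContinuousLinearEquiv.equivOfInverse
    ((ContinuousLinearMap.fst ℝ V ℝ + (ContinuousLinearMap.snd ℝ V ℝ).smulRight N).prod
      (c • (innerSL ℝ N).comp (ContinuousLinearMap.fst ℝ V ℝ)))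
    ((ContinuousLinearMap.fst ℝ V ℝ - ((innerSL ℝ N).comp (ContinuousLinearMap.fst ℝ V ℝ)
        - c⁻¹ • ContinuousLinearMap.snd ℝ V ℝ).smulRight N).prod
      ((innerSL ℝ N).comp (ContinuousLinearMap.fst ℝ V ℝ) - c⁻¹ • ContinuousLinearMap.snd ℝ V ℝ))
    (by
      rintro ⟨v, s⟩
      have h : c⁻¹ * (c * ⟪N, v⟫) = ⟪N, v⟫ := inv_mul_cancel_left₀ hc _
      simp [inner_add_right, real_inner_smul_right, hN, h])
    (by
      rintro ⟨v, s⟩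
      simp [inner_sub_right, real_inner_smul_right, hN, mul_inv_cancel_left₀ hc])

theorem hasFDerivAt_normalCoord {r : V → ℝ} (hr : ContDiff ℝ (⊤ : ℕ∞) r) {p : V}
    (hgp : gradient r p ≠ 0) :
    HasFDerivAt (fun w : V × ℝ => (w.1 + w.2 • unitNormal r w.1, r w.1))
      (normalCoordEquiv (unitNormal r p) (norm_unitNormal hgp) ‖gradient r p‖
        (norm_ne_zero_iff.2 hgp) : (V × ℝ) →L[ℝ] V × ℝ) (p, 0) := by
  have hN := ((contDiffAt_unitNormal hr hgp).differentiableAt (by simp)).hasFDerivAt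
  have hN' := HasFDerivAt.comp (p, (0 : ℝ)) (f := Prod.fst) hN hasFDerivAt_fst
  have hr' := HasFDerivAt.comp (p, (0 : ℝ)) (f := Prod.fst)
    (hr.differentiable (by simp) p).hasFDerivAt hasFDerivAt_fst
  have h := ((hasFDerivAt_fst (𝕜 := ℝ) (p := (p, (0 : ℝ)))).add
    (hasFDerivAt_snd.smul hN')).prodMk hr'
  refine h.congr_fderiv ?_
  ext v <;> simp [normalCoordEquiv, fderiv_apply_eq_norm_mul_inner r p]

open scoped Classical in
/-- Near a boundary point, the signed distance and the nearest-point projection are smooth. -/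
theorem exists_smooth_projection [FiniteDimensional ℝ V] {r : V → ℝ}
    (hr : ContDiff ℝ (⊤ : ℕ∞) r) {Ω : Set V}
    (hΩ : IsOpen Ω) (hdef : Ω = {x | r x < 0}) {δ : V → ℝ}
    (hsd : ∀ x, δ x = if x ∈ Ω then -infDist x (frontier Ω) else infDist x (frontier Ω))
    {p : V} (hp : p ∈ frontier Ω) (hgp : gradient r p ≠ 0) :
    ∃ b : V → V, ∀ᶠ x in 𝓝 p, ContDiffAt ℝ (⊤ : ℕ∞) δ x ∧ ContDiffAt ℝ (⊤ : ℕ∞) b x ∧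
      b x ∈ frontier Ω ∧ x = b x + δ x • unitNormal r (b x) ∧
      ∀ y ∈ frontier Ω, dist x y = infDist x (frontier Ω) → y = b x := by
  set F : V × ℝ → V × ℝ := fun w => (w.1 + w.2 • unitNormal r w.1, r w.1) with hF
  have hrp := eq_zero_of_mem_frontier hr.continuous hdef hp
  have hFp : F (p, 0) = (p, 0) := by simp [hF, hrp]
  have hFsmooth : ∀ᶠ w in 𝓝 (p, (0 : ℝ)), ContDiffAt ℝ (⊤ : ℕ∞) F w := by
    have : ∀ᶠ w : V × ℝ in 𝓝 (p, 0), gradient r w.1 ≠ 0 :=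
      continuousAt_fst.eventually (eventually_gradient_ne_zero hr hgp)
    filter_upwards [this] with w hw
    have hN : ContDiffAt ℝ (⊤ : ℕ∞) (fun w : V × ℝ => unitNormal r w.1) w :=
      (contDiffAt_unitNormal hr hw).comp w contDiffAt_fst
    exact (contDiffAt_fst.add (contDiffAt_snd.smul hN)).prodMk (hr.contDiffAt.comp w contDiffAt_fst)
  obtain ⟨g, hg, hgF⟩ := exists_smooth_local_left_inverse _ hFsmooth (hasFDerivAt_normalCoord hr hgp)
  rw [hFp] at hg
  have hι : ContDiff ℝ (⊤ : ℕ∞) (fun x : V => (x, (0 : ℝ))) := contDiff_id.prodMk contDiff_const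
  have hgs : ∀ᶠ x in 𝓝 p, ContDiffAt ℝ (⊤ : ℕ∞) (fun x => g (x, 0)) x := by
    filter_upwards [hι.continuous.continuousAt.eventually hg] with x hx
    exact hx.comp x hι.contDiffAt
  have hδ0 : δ p = 0 := by simp [hsd, infDist_zero_of_mem hp]
  have hδcont : ContinuousAt δ p := by
    rw [ContinuousAt, hδ0]
    refine squeeze_zero_norm (a := fun x => infDist x (frontier Ω)) (fun x => ?_) ?_
    · rw [hsd]
      split_ifs <;> simp [abs_of_nonneg infDist_nonneg]
    · simpa [infDist_zero_of_mem hp] using (continuous_infDist_pt (frontier Ω)).tendsto p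
  have hnear : ∀ᶠ x in 𝓝 p, ∀ y ∈ frontier Ω, dist x y = infDist x (frontier Ω) →
      g (x, 0) = (y, δ x) := by
    have hq : ∀ᶠ q in 𝓝 (p, p), g (F (q.2, δ q.1)) = (q.2, δ q.1) := by
      have : ContinuousAt (fun q : V × V => (q.2, δ q.1)) (p, p) :=
        continuousAt_snd.prodMk (ContinuousAt.comp_of_eq hδcont continuousAt_fst rfl)
      rw [ContinuousAt, hδ0] at this
      exact this.eventually hgF
    filter_upwards [eventually_forall_nearest hp hq,
      eventually_eq_add_smul_unitNormal hr hΩ hdef hsd hp hgp] with x hx1 hx2 y hy hxy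
    have h1 := hx1 y hy hxy
    have h2 : F (y, δ x) = (x, 0) := by
      simp only [hF]
      rw [← hx2 y hy hxy, eq_zero_of_mem_frontier hr.continuous hdef hy]
    rwa [h2] at h1
  have hexists : ∀ x, ∃ y ∈ frontier Ω, dist x y = infDist x (frontier Ω) := fun x => by
    obtain ⟨y, hy, h⟩ := isClosed_frontier.exists_infDist_eq_dist ⟨p, hp⟩ x
    exact ⟨y, hy, h.symm⟩
  have hδg : ∀ᶠ x in 𝓝 p, δ x = (g (x, 0)).2 := by
    filter_upwards [hnear] with x hx
    obtain ⟨y, hy, hxy⟩ := hexists x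
    rw [hx y hy hxy]
  refine ⟨fun x => (g (x, 0)).1, ?_⟩
  filter_upwards [hgs, hnear, eventually_eventually_nhds.2 hδg,
    eventually_eq_add_smul_unitNormal hr hΩ hdef hsd hp hgp] with x hgx hx hδx hxe
  obtain ⟨y, hy, hxy⟩ := hexists x
  have hgy := hx y hy hxy
  refine ⟨(contDiffAt_snd.comp x hgx).congr_of_eventuallyEq hδx, contDiffAt_fst.comp x hgx, ?_, ?_,
    fun z hz hxz => ?_⟩
  · simpa [hgy] using hy
  · simpa [hgy] using hxe y hy hxy
  · simp [hx z hz hxz]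

/-- Differentiating `z = b z + δ z N(b z)` along the level set `r ∘ b = 0`. -/
theorem fderiv_normal_decomposition {r : V → ℝ} (hr : ContDiff ℝ (⊤ : ℕ∞) r) {δ : V → ℝ} {b : V → V}
    {x : V} (hδ : DifferentiableAt ℝ δ x) (hb : DifferentiableAt ℝ b x)
    (hg : gradient r (b x) ≠ 0) (h0 : ∀ᶠ z in 𝓝 x, r (b z) = 0)
    (hdec : ∀ᶠ z in 𝓝 x, z = b z + δ z • unitNormal r (b z)) (ξ : V) :
    ⟪unitNormal r (b x), fderiv ℝ b x ξ⟫ = 0 ∧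
    fderiv ℝ δ x ξ = ⟪unitNormal r (b x), ξ⟫ ∧
    ξ = fderiv ℝ b x ξ + ⟪unitNormal r (b x), ξ⟫ • unitNormal r (b x)
      + δ x • fderiv ℝ (unitNormal r) (b x) (fderiv ℝ b x ξ) := by
  have hN := ((contDiffAt_unitNormal hr hg).differentiableAt (by simp)).hasFDerivAt
  have hNb := hN.comp x hb.hasFDerivAt
  have hrb := ((hr.differentiable (by simp)) (b x)).hasFDerivAt.comp x hb.hasFDerivAt
  have h1 := DFunLike.congr_fun
    (hrb.unique ((hasFDerivAt_const (0 : ℝ) x).congr_of_eventuallyEq h0)) ξ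
  have htan : ⟪unitNormal r (b x), fderiv ℝ b x ξ⟫ = 0 := by
    simp only [ContinuousLinearMap.comp_apply, zero_apply, fderiv_apply_eq_norm_mul_inner] at h1
    exact (mul_eq_zero.1 h1).resolve_left (norm_ne_zero_iff.2 hg)
  have h2 := DFunLike.congr_fun ((hasFDerivAt_id x).unique
    ((hb.hasFDerivAt.add (hδ.hasFDerivAt.smul hNb)).congr_of_eventuallyEq hdec)) ξ
  simp at h2
  have h3 : ⟪unitNormal r (b x), ξ⟫ = fderiv ℝ δ x ξ := by
    have hperp := inner_fderiv_unitNormal_unitNormal hr hg (fderiv ℝ b x ξ)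
    rw [real_inner_comm] at hperp
    nth_rewrite 1 [h2]
    simp [inner_add_right, real_inner_smul_right, htan, hperp, norm_unitNormal hg]
  refine ⟨htan, h3.symm, ?_⟩
  rw [h3]
  nth_rewrite 1 [h2]
  abel

/-- The Hessian of `δ` in terms of the shape operator at the projected point. -/
theorem hess_eq_inner_fderiv_unitNormal {r : V → ℝ} (hr : ContDiff ℝ (⊤ : ℕ∞) r) {δ : V → ℝ}
    {b : V → V} {x : V} (hδ : ∀ᶠ z in 𝓝 x, DifferentiableAt ℝ δ z)
    (hb : ∀ᶠ z in 𝓝 x, DifferentiableAt ℝ b z) (hg : ∀ᶠ z in 𝓝 x, gradient r (b z) ≠ 0)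
    (h0 : ∀ᶠ z in 𝓝 x, r (b z) = 0)
    (hdec : ∀ᶠ z in 𝓝 x, z = b z + δ z • unitNormal r (b z)) (ξ ζ : V) :
    Hess δ x ξ ζ = ⟪fderiv ℝ (unitNormal r) (b x) (fderiv ℝ b x ξ), ζ⟫ := by
  have heq : (fun z => fderiv ℝ δ z ζ) =ᶠ[𝓝 x] fun z => ⟪unitNormal r (b z), ζ⟫ := by
    filter_upwards [hδ, hb, hg, eventually_eventually_nhds.2 h0,
      eventually_eventually_nhds.2 hdec] with z h1 h2 h3 h4 h5
    exact (fderiv_normal_decomposition hr h1 h2 h3 h4 h5 ζ).2.1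
  have hN := ((contDiffAt_unitNormal hr hg.self_of_nhds).differentiableAt (by simp)).hasFDerivAt
  have hNb : HasFDerivAt (fun z => unitNormal r (b z)) _ x :=
    hN.comp x hb.self_of_nhds.hasFDerivAt
  rw [Hess, heq.fderiv_eq, (hNb.inner ℝ (hasFDerivAt_const ζ x)).fderiv]
  simp [fderivInnerCLM_apply]

/-- For a shape operator `S`, symmetric and positive semidefinite on `N⊥`, and a small parameter
`d`, both `|d| ‖S η‖²` and `d² ⟪S (S η), S η⟫` are bounded by `⟪S η, η⟫`. -/
theorem shape_operator_bounds {W : Type*} [NormedAddCommGroup W] [InnerProductSpace ℝ W]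
    {S : W →L[ℝ] W} {N : W} {d : ℝ}
    (hSN : ∀ u, ⟪N, S u⟫ = 0)
    (hsymm : ∀ u v, ⟪N, u⟫ = 0 → ⟪N, v⟫ = 0 → ⟪S u, v⟫ = ⟪S v, u⟫)
    (hpos : ∀ u, ⟪N, u⟫ = 0 → 0 ≤ ⟪S u, u⟫) (hd : |d| * ‖S‖ ≤ 1) {η : W} (hη : ⟪N, η⟫ = 0) :
    |d| * ⟪S η, S η⟫ ≤ ⟪S η, η⟫ ∧ d ^ 2 * ⟪S (S η), S η⟫ ≤ ⟪S η, η⟫ := by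
  have hk : ⟪S (S η), S η⟫ ≤ ‖S‖ * ⟪S η, S η⟫ := by
    rw [real_inner_self_eq_norm_sq]
    calc ⟪S (S η), S η⟫ ≤ ‖S (S η)‖ * ‖S η‖ := real_inner_le_norm _ _
      _ ≤ ‖S‖ * ‖S η‖ * ‖S η‖ := by gcongr; exact S.le_opNorm _
      _ = ‖S‖ * ‖S η‖ ^ 2 := by ring
  have hm : 0 ≤ ⟪S η, S η⟫ := real_inner_self_nonneg
  have hk' : d ^ 2 * ⟪S (S η), S η⟫ ≤ |d| * ⟪S η, S η⟫ :=
    calc d ^ 2 * ⟪S (S η), S η⟫ ≤ d ^ 2 * (‖S‖ * ⟪S η, S η⟫) := by gcongr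
      _ = |d| * ((|d| * ‖S‖) * ⟪S η, S η⟫) := by rw [← sq_abs]; ring
      _ ≤ |d| * (1 * ⟪S η, S η⟫) := by gcongr
      _ = |d| * ⟪S η, S η⟫ := by rw [one_mul]
  have hq := hpos (η - |d| • S η) (by simp [inner_sub_right, real_inner_smul_right, hη, hSN])
  have hs := hsymm (S η) η (hSN η) hη
  simp only [map_sub, map_smul, inner_sub_left, inner_sub_right, real_inner_smul_left,
    real_inner_smul_right, hs] at hq
  rw [← sq_abs] at hk' ⊢
  constructor <;> nlinarith

open scoped Classical in
/-- Local form of the convexity of the signed distance near a boundary point. -/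
theorem eventually_hess_signed_distance [FiniteDimensional ℝ V] {r : V → ℝ}
    (hr : ContDiff ℝ (⊤ : ℕ∞) r) {Ω : Set V} (hΩ : IsOpen Ω) (hdef : Ω = {x | r x < 0})
    (hgrad : ∀ p ∈ frontier Ω, gradient r p ≠ 0)
    (hconv : ∀ p ∈ frontier Ω, ∀ τ : V, ⟪gradient r p, τ⟫ = 0 → 0 ≤ Hess r p τ τ) {δ : V → ℝ}
    (hsd : ∀ x, δ x = if x ∈ Ω then -infDist x (frontier Ω) else infDist x (frontier Ω))
    {p : V} (hp : p ∈ frontier Ω) :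
    ∀ᶠ x in 𝓝 p, ContDiffAt ℝ (⊤ : ℕ∞) δ x ∧ (∀ ξ, 0 ≤ Hess δ x ξ ξ) ∧
      ∀ y ∈ frontier Ω, dist x y = infDist x (frontier Ω) →
        ∀ ξ, (1 / 2) * Hess δ y ξ ξ ≤ Hess δ x ξ ξ := by
  obtain ⟨b, hb⟩ := exists_smooth_projection hr hΩ hdef hsd hp (hgrad p hp)
  have hb' := eventually_eventually_nhds.2 hb
  have hδ0 : ∀ y ∈ frontier Ω, δ y = 0 := fun y hy => by simp [hsd, infDist_zero_of_mem hy]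
  have hbp : b p = p := (hb.self_of_nhds.2.2.2.2 p hp (by simp [infDist_zero_of_mem hp])).symm
  have hbc : ContinuousAt b p := hb.self_of_nhds.2.1.continuousAt
  have hbt : Tendsto b (𝓝 p) (𝓝 p) := by rwa [ContinuousAt, hbp] at hbc
  have hδc : ContinuousAt δ p := hb.self_of_nhds.1.continuousAt
  have hSc : ContinuousAt (fun x => fderiv ℝ (unitNormal r) (b x)) p :=
    ContinuousAt.comp_of_eq ((contDiffAt_unitNormal hr (hgrad p hp)).fderiv_right
      (m := 0) (by simp)).continuousAt hbc hbp
  have hsmall : ∀ᶠ x in 𝓝 p, |δ x| * ‖fderiv ℝ (unitNormal r) (b x)‖ < 1 :=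
    (hδc.abs.mul hSc.norm).eventually_lt_const (by simp [hδ0 p hp])
  have hess : ∀ x, (∀ᶠ z in 𝓝 x, ContDiffAt ℝ (⊤ : ℕ∞) δ z ∧ ContDiffAt ℝ (⊤ : ℕ∞) b z ∧
      b z ∈ frontier Ω ∧ z = b z + δ z • unitNormal r (b z) ∧
      ∀ y ∈ frontier Ω, dist z y = infDist z (frontier Ω) → y = b z) → ∀ ξ,
      ∃ η, ⟪unitNormal r (b x), η⟫ = 0 ∧
        ξ = η + ⟪unitNormal r (b x), ξ⟫ • unitNormal r (b x)
          + δ x • fderiv ℝ (unitNormal r) (b x) η ∧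
        Hess δ x ξ ξ = ⟪fderiv ℝ (unitNormal r) (b x) η, ξ⟫ := by
    intro x hx ξ
    have h1 := hx.mono fun z hz => hz.1.differentiableAt (by simp)
    have h2 := hx.mono fun z hz => hz.2.1.differentiableAt (by simp)
    have h3 := hx.mono fun z hz => hgrad _ hz.2.2.1
    have h4 := hx.mono fun z hz => eq_zero_of_mem_frontier hr.continuous hdef hz.2.2.1
    have h5 := hx.mono fun z hz => hz.2.2.2.1
    obtain ⟨ht, -, hd⟩ := fderiv_normal_decomposition hr h1.self_of_nhds h2.self_of_nhds
      h3.self_of_nhds h4 h5 ξ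
    exact ⟨_, ht, hd, hess_eq_inner_fderiv_unitNormal hr h1 h2 h3 h4 h5 ξ ξ⟩
  filter_upwards [hb', hbt.eventually hb', hsmall] with x hx hbx hsx
  obtain ⟨hδx, -, hfx, -, hux⟩ := hx.self_of_nhds
  have hgx := hgrad _ hfx
  set q := b x
  set N := unitNormal r q
  set S := fderiv ℝ (unitNormal r) q
  have hSN : ∀ u, ⟪N, S u⟫ = 0 := fun u => by
    rw [real_inner_comm]
    exact inner_fderiv_unitNormal_unitNormal hr hgx u
  have hsymm : ∀ u v, ⟪N, u⟫ = 0 → ⟪N, v⟫ = 0 → ⟪S u, v⟫ = ⟪S v, u⟫ := fun u v hu hv => by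
    rw [inner_fderiv_unitNormal_tangent hr hgx u hv, inner_fderiv_unitNormal_tangent hr hgx v hu,
      hess_symm hr]
  have hpos : ∀ u, ⟪N, u⟫ = 0 → 0 ≤ ⟪S u, u⟫ := fun u hu => by
    rw [inner_fderiv_unitNormal_tangent hr hgx u hu]
    refine mul_nonneg (by positivity) (hconv q hfx u ?_)
    rw [inner_gradient_left, fderiv_apply_eq_norm_mul_inner, hu, mul_zero]
  have hbq : b q = q :=
    (hbx.self_of_nhds.2.2.2.2 q hfx (by simp [infDist_zero_of_mem hfx])).symm
  have key : ∀ ξ, 0 ≤ Hess δ x ξ ξ ∧ (1 / 2) * Hess δ q ξ ξ ≤ Hess δ x ξ ξ := by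
    intro ξ
    obtain ⟨η, hη, hξ, hH⟩ := hess x hx ξ
    obtain ⟨η', -, hξ', hH'⟩ := hess q hbx ξ
    rw [hbq, hδ0 q hfx, zero_smul, add_zero] at hξ'
    rw [hbq] at hH'
    obtain ⟨hm, hk⟩ := shape_operator_bounds hSN hsymm hpos hsx.le hη
    have hη' : η' = η + δ x • S η := by
      have : η' = ξ - ⟪N, ξ⟫ • N := eq_sub_of_add_eq hξ'.symm
      rw [this]
      nth_rewrite 1 [hξ]
      abel
    have hSN' : ∀ u, ⟪S u, N⟫ = 0 := fun u => by rw [real_inner_comm, hSN]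
    have hX : Hess δ x ξ ξ = ⟪S η, η⟫ + δ x * ⟪S η, S η⟫ := by
      rw [hH]
      nth_rewrite 1 [hξ]
      rw [inner_add_right, inner_add_right, real_inner_smul_right, real_inner_smul_right, hSN']
      ring
    have hY : Hess δ q ξ ξ
        = ⟪S η, η⟫ + 2 * (δ x * ⟪S η, S η⟫) + δ x ^ 2 * ⟪S (S η), S η⟫ := by
      rw [hH']
      nth_rewrite 1 [hξ']
      rw [inner_add_right, real_inner_smul_right, hSN', hη', map_add, map_smul, inner_add_left,
        inner_add_right, inner_add_right, real_inner_smul_left, real_inner_smul_left,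
        real_inner_smul_right, real_inner_smul_right, hsymm (S η) η (hSN η) hη]
      ring
    have hmnn : 0 ≤ ⟪S η, S η⟫ := real_inner_self_nonneg
    have habs : -(|δ x| * ⟪S η, S η⟫) ≤ δ x * ⟪S η, S η⟫ := by
      rw [← neg_mul]
      exact mul_le_mul_of_nonneg_right (neg_abs_le _) hmnn
    rw [hX, hY]
    constructor <;> linarith
  refine ⟨hδx, fun ξ => (key ξ).1, fun y hy hxy ξ => ?_⟩
  rw [hux y hy hxy]
  exact (key ξ).2

end

open scoped Classical in
/-- the signed distance function of a smoothly bounded convex domain is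
convex on a neighborhood of the boundary; moreover outside the closure one has
`H_δ(ξ,ξ)(x) ≥ (1/2)·H_δ(ξ,ξ)(b(x))` for the nearest boundary point `b(x)`. -/
theorem signed_distance_convex
    {n : ℕ} (Ω : Set (E n)) (hΩ : IsOpen Ω) (hbd : Bornology.IsBounded Ω)
    (r : E n → ℝ) (hr : ContDiff ℝ (⊤ : ℕ∞) r) (hdef : Ω = {x | r x < 0})
    (hgrad : ∀ p ∈ frontier Ω, gradient r p ≠ 0)
    (hconv : ∀ p ∈ frontier Ω, ∀ τ : E n, ⟪gradient r p, τ⟫ = 0 → 0 ≤ Hess r p τ τ)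
    (δ : E n → ℝ)
    (hsd : ∀ x, δ x = if x ∈ Ω then -Metric.infDist x (frontier Ω)
      else Metric.infDist x (frontier Ω)) :
    ∃ U : Set (E n), IsOpen U ∧ frontier Ω ⊆ U ∧ ContDiffOn ℝ (⊤ : ℕ∞) δ U ∧
      (∀ x ∈ U, ∀ ξ : E n, 0 ≤ Hess δ x ξ ξ) ∧
      ∀ x ∈ U, x ∉ closure Ω → ∀ y ∈ frontier Ω,
        dist x y = Metric.infDist x (frontier Ω) →
        ∀ ξ : E n, (1 / 2) * Hess δ y ξ ξ ≤ Hess δ x ξ ξ := by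
  have h := fun p hp => eventually_hess_signed_distance hr hΩ hdef hgrad hconv hsd (p := p) hp
  refine ⟨interior {x | ContDiffAt ℝ (⊤ : ℕ∞) δ x ∧ (∀ ξ, 0 ≤ Hess δ x ξ ξ) ∧
      ∀ y ∈ frontier Ω, dist x y = infDist x (frontier Ω) →
        ∀ ξ, (1 / 2) * Hess δ y ξ ξ ≤ Hess δ x ξ ξ}, isOpen_interior,
    fun p hp => mem_interior_iff_mem_nhds.2 (h p hp),
    fun x hx => (interior_subset hx).1.contDiffWithinAt, fun x hx => (interior_subset hx).2.1,
    fun x hx _ => (interior_subset hx).2.2⟩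
end

section
/- Let Ω ⊂ ℝⁿ be a smoothly bounded domain, p ∈ bΩ, and σ a smooth defining function for Ω on a neighborhood U of p with ‖∇σ‖ = 1 on bΩ ∩ U. If Ω is convex on U, then there exist a neighborhood V ⊂ U of p and constants C₁, C₂ > 0 such that H_σ(ξ,ξ)(x) ≥ −C₁σ²(x)‖ξ‖² − C₂|⟨∇σ(x),ξ⟩|²/‖∇σ(x)‖² for all x ∈ V and ξ ∈ ℝⁿ. -/
open RealInnerProductSpace Metric Bornology

open Filter Topology

theorem minSmoothness_two_le_infty : minSmoothness ℝ 2 ≤ ((⊤ : ℕ∞) : WithTop ℕ∞) := by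
  rw [minSmoothness_of_isRCLikeNormedField]
  exact WithTop.coe_le_coe.2 (le_top : (2 : ℕ∞) ≤ ⊤)

theorem eq_zero_of_mem_frontier_s17 {T : Type*} [TopologicalSpace T] {Ω U : Set T}
    {σ : T → ℝ} {y : T} (hΩ : IsOpen Ω) (hU : IsOpen U)
    (hdef : Ω ∩ U = {x ∈ U | σ x < 0}) (hy : y ∈ U) (hyΩ : y ∈ frontier Ω)
    (hσ : ContinuousAt σ y) : σ y = 0 := by
  rw [hΩ.frontier_eq] at hyΩ
  apply le_antisymm
  · by_contra! hpos
    obtain ⟨z, ⟨hz0, hzU⟩, hzΩ⟩ := mem_closure_iff_nhds.1 hyΩ.1 _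
      (inter_mem (hσ.eventually (lt_mem_nhds hpos)) (hU.mem_nhds hy))
    have : z ∈ {x ∈ U | σ x < 0} := hdef ▸ ⟨hzΩ, hzU⟩
    exact lt_asymm this.2 hz0
  · by_contra! hneg
    have : y ∈ Ω ∩ U := by
      rw [hdef]
      exact ⟨hy, hneg⟩
    exact hyΩ.2 this.1

/-- Uniform first order Taylor estimate for a function whose derivative is Lipschitz on a ball. -/
theorem norm_sub_sub_fderiv_le {F X : Type*} [NormedAddCommGroup F] [NormedSpace ℝ F]
    [NormedAddCommGroup X] [NormedSpace ℝ X] {f : F → X}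
    {p x y : F} {r L : ℝ} (hf : ∀ z ∈ ball p r, DifferentiableAt ℝ f z)
    (hL : 0 ≤ L)
    (hlip : ∀ z ∈ ball p r, ∀ w ∈ ball p r, ‖fderiv ℝ f z - fderiv ℝ f w‖ ≤ L * ‖z - w‖)
    (hx : x ∈ ball p r) (hy : y ∈ ball p r) :
    ‖f x - f y - fderiv ℝ f y (x - y)‖ ≤ L * ‖x - y‖ ^ 2 := by
  rw [sq, ← mul_assoc]
  refine Convex.norm_image_sub_le_of_norm_hasFDerivWithin_le'
    (s := ball p r ∩ closedBall y ‖x - y‖) (f' := fderiv ℝ f)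
    (fun z hz => (hf z hz.1).hasFDerivAt.hasFDerivWithinAt) (fun z hz => ?_)
    ((convex_ball _ _).inter (convex_closedBall _ _)) ⟨hy, by simp⟩
    ⟨hx, by simp [dist_eq_norm]⟩
  refine (hlip z hz.1 y hy).trans ?_
  gcongr
  rw [← dist_eq_norm]
  exact hz.2

/-- A map that is smooth at `p` is eventually bounded and Lipschitz, with a common constant. -/
theorem ContDiffAt.exists_lipschitz_bound {F X : Type*} [NormedAddCommGroup F] [NormedSpace ℝ F]
    [NormedAddCommGroup X] [NormedSpace ℝ X]
    {f : F → X} {p : F} (hf : ContDiffAt ℝ (⊤ : ℕ∞) f p) :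
    ∃ K : ℝ, ∃ t ∈ 𝓝 p, (∀ z ∈ t, ∀ w ∈ t, ‖f z - f w‖ ≤ K * ‖z - w‖) ∧ ∀ z ∈ t, ‖f z‖ ≤ K := by
  obtain ⟨K, t, ht, hK⟩ := (hf.of_le (m := 1) (by exact_mod_cast le_top)).exists_lipschitzOnWith
  have hb : ∀ᶠ z in 𝓝 p, ‖f z‖ < ‖f p‖ + 1 :=
    hf.continuousAt.norm.eventually (gt_mem_nhds (lt_add_one _))
  refine ⟨max K (‖f p‖ + 1), t ∩ {z | ‖f z‖ < ‖f p‖ + 1}, inter_mem ht hb, ?_, ?_⟩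
  · intro z hz w hw
    refine (hK.norm_sub_le hz.1 hw.1).trans ?_
    gcongr
    exact le_max_left _ _
  · intro z hz
    exact (le_of_lt hz.2).trans (le_max_right _ _)

section

variable {F : Type*} [NormedAddCommGroup F] [InnerProductSpace ℝ F]

theorem eq_inner_smul_of_forall_inner_eq_zero {u w : F} (hu : ‖u‖ = 1)
    (h : ∀ τ : F, ⟪u, τ⟫ = 0 → ⟪w, τ⟫ = 0) : w = ⟪w, u⟫ • u := by
  have hperp : ⟪u, w - ⟪w, u⟫ • u⟫ = 0 := by
    rw [inner_sub_right, inner_smul_right, real_inner_self_eq_norm_sq, hu, real_inner_comm]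
    ring
  have h2 := h _ hperp
  have h3 : ⟪w - ⟪w, u⟫ • u, w - ⟪w, u⟫ • u⟫ = 0 := by
    rw [inner_sub_left, h2, inner_smul_left, hperp]
    simp
  exact sub_eq_zero.1 (inner_self_eq_zero.1 h3)

/-- A symmetric operator that is positive semidefinite on an invariant hyperplane `u^⊥` satisfies
`‖A τ‖² ≤ M ⟪A τ, τ⟫` there. -/
theorem norm_sq_apply_le_of_nonneg_on_orthogonal {A : F →L[ℝ] F} {u τ : F} {κ M : ℝ}
    (hsymm : ∀ v w : F, ⟪A v, w⟫ = ⟪A w, v⟫) (hu : A u = κ • u)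
    (hpos : ∀ v : F, ⟪u, v⟫ = 0 → 0 ≤ ⟪A v, v⟫) (hM : ‖A‖ ≤ M) (hM0 : 0 < M)
    (hτ : ⟪u, τ⟫ = 0) : ‖A τ‖ ^ 2 ≤ M * ⟪A τ, τ⟫ := by
  have hAτ : ⟪u, A τ⟫ = 0 := by
    rw [real_inner_comm, hsymm, hu, inner_smul_left, hτ, mul_zero]
  have h1 := hpos (τ - M⁻¹ • A τ) (by rw [inner_sub_right, inner_smul_right, hτ, hAτ]; simp)
  have h2 : ⟪A (A τ), A τ⟫ ≤ M * ‖A τ‖ ^ 2 := by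
    calc ⟪A (A τ), A τ⟫ ≤ ‖A (A τ)‖ * ‖A τ‖ := real_inner_le_norm _ _
      _ ≤ (M * ‖A τ‖) * ‖A τ‖ := by gcongr; exact A.le_of_opNorm_le hM _
      _ = _ := by ring
  simp only [map_sub, map_smul, inner_sub_left, inner_sub_right, inner_smul_left,
    inner_smul_right, hsymm (A τ) τ, real_inner_self_eq_norm_sq, RCLike.conj_to_real] at h1
  have h3 : 0 ≤ ⟪A τ, τ⟫ - M⁻¹ * ‖A τ‖ ^ 2 := by
    have h4 : M⁻¹ * (M⁻¹ * ⟪A (A τ), A τ⟫) ≤ M⁻¹ * (M⁻¹ * (M * ‖A τ‖ ^ 2)) := by gcongr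
    rw [inv_mul_cancel_left₀ hM0.ne'] at h4
    linarith
  have h5 := mul_nonneg hM0.le h3
  rw [mul_sub, mul_inv_cancel_left₀ hM0.ne'] at h5
  linarith

theorem abs_inner_apply_le {A : F →L[ℝ] F} {c : ℝ} (hA : ‖A‖ ≤ c) (v w : F) :
    |⟪A v, w⟫| ≤ c * ‖v‖ * ‖w‖ :=
  (abs_real_inner_le_norm _ _).trans (by gcongr; exact A.le_of_opNorm_le hA v)

/-- Lower bound for the quadratic form of `A₁` in terms of a nearby symmetric `A₀` which has the
unit vector `u` as an eigenvector and a perturbation `B` of `A₀` that is positive semidefinite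
on `u^⊥`. -/
theorem quadratic_form_lower_bound {A₀ A₁ B : F →L[ℝ] F} {u N ξ : F} {κ L δ : ℝ}
    (hL : 0 ≤ L) (hu : ‖u‖ = 1) (hsymm : ∀ v w : F, ⟪A₀ v, w⟫ = ⟪A₀ w, v⟫)
    (hA₀ : A₀ u = κ • u) (hB : ∀ τ : F, ⟪u, τ⟫ = 0 → 0 ≤ ⟪B τ, τ⟫)
    (hAB : ‖A₁ - B‖ ≤ L * δ ^ 2) (hA : ‖A₁ - A₀‖ ≤ L * δ) (hA₁ : ‖A₁‖ ≤ L)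
    (hN : ‖N - u‖ ≤ L * δ) (hN0 : N ≠ 0) (hN2 : ‖N‖ ≤ 2) :
    -((2 * L + 4 * L ^ 3) * δ ^ 2 * ‖ξ‖ ^ 2) - 16 * L * ⟪N, ξ⟫ ^ 2 / ‖N‖ ^ 2 ≤ ⟪A₁ ξ, ξ⟫ := by
  set a := ⟪u, ξ⟫ with ha
  set τ := ξ - a • u with hτdef
  have hξ : ξ = τ + a • u := by rw [hτdef]; abel
  have hτ : ⟪u, τ⟫ = 0 := by
    rw [hτdef, inner_sub_right, inner_smul_right, real_inner_self_eq_norm_sq, hu]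
    simp [ha]
  have hτ' : ⟪τ, u⟫ = 0 := by rw [real_inner_comm, hτ]
  have hnorm : ‖τ‖ ^ 2 ≤ ‖ξ‖ ^ 2 := by
    have : ‖ξ‖ ^ 2 = ‖τ‖ ^ 2 + a ^ 2 := by
      rw [hξ, ← real_inner_self_eq_norm_sq (τ + a • u), inner_add_left, inner_add_right,
        inner_add_right, inner_smul_left, inner_smul_right, inner_smul_left, inner_smul_right, hτ,
        hτ', real_inner_self_eq_norm_sq, real_inner_self_eq_norm_sq, hu, RCLike.conj_to_real]
      ring
    nlinarith [sq_nonneg a]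
  have h00 : ⟪A₀ u, τ⟫ = 0 := by rw [hA₀, inner_smul_left, hτ, mul_zero]
  have h00' : ⟪A₀ τ, u⟫ = 0 := by rw [hsymm, h00]
  have h1 := abs_le.1 (abs_inner_apply_le hAB τ τ)
  have h2 := abs_le.1 (abs_inner_apply_le hA τ (a • u))
  have h3 := abs_le.1 (abs_inner_apply_le hA (a • u) τ)
  have h4 := abs_le.1 (abs_inner_apply_le hA₁ (a • u) (a • u))
  have h5 := hB τ hτ
  simp only [sub_apply, inner_sub_left] at h1 h2 h3
  have h6 : ⟪A₀ τ, a • u⟫ = 0 := by rw [inner_smul_right, h00', mul_zero]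
  have h7 : ⟪A₀ (a • u), τ⟫ = 0 := by rw [map_smul, inner_smul_left, h00, mul_zero]
  rw [h6] at h2
  rw [h7] at h3
  have hau : ‖a • u‖ = |a| := by rw [norm_smul, hu, mul_one, Real.norm_eq_abs]
  rw [hau] at h2 h3 h4
  have hsum : ⟪A₁ ξ, ξ⟫ = ⟪A₁ τ, τ⟫ + ⟪A₁ τ, a • u⟫ + ⟪A₁ (a • u), τ⟫ + ⟪A₁ (a • u), a • u⟫ := by
    conv_lhs => rw [hξ]
    simp only [map_add, inner_add_left, inner_add_right]
    ring
  have haa : L * (|a| * |a|) = L * a ^ 2 := by rw [← sq, sq_abs]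
  have hcross : 2 * (L * δ * ‖τ‖ * |a|) ≤ L * (δ ^ 2 * ‖τ‖ ^ 2 + a ^ 2) := by
    have := mul_nonneg hL (sq_nonneg (δ * ‖τ‖ - |a|))
    linarith
  have hlow : -(2 * L * δ ^ 2 * ‖ξ‖ ^ 2) - 2 * L * a ^ 2 ≤ ⟪A₁ ξ, ξ⟫ := by
    have : 2 * L * δ ^ 2 * ‖τ‖ ^ 2 ≤ 2 * L * δ ^ 2 * ‖ξ‖ ^ 2 := by gcongr
    rw [hsum]
    linarith [h1.1, h2.1, h3.1, h4.1]
  have hdiff : ⟪N - u, ξ⟫ ^ 2 ≤ L ^ 2 * δ ^ 2 * ‖ξ‖ ^ 2 := by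
    have h := (abs_real_inner_le_norm (N - u) ξ).trans
      (mul_le_mul_of_nonneg_right hN (norm_nonneg ξ))
    calc ⟪N - u, ξ⟫ ^ 2 = |⟪N - u, ξ⟫| ^ 2 := (sq_abs _).symm
      _ ≤ (L * δ * ‖ξ‖) ^ 2 := by gcongr
      _ = _ := by ring
  have hasq : a ^ 2 ≤ 2 * ⟪N, ξ⟫ ^ 2 + 2 * (L ^ 2 * δ ^ 2 * ‖ξ‖ ^ 2) := by
    rw [inner_sub_left, ← ha] at hdiff
    nlinarith [sq_nonneg (2 * ⟪N, ξ⟫ - a)]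
  have hNpos : 0 < ‖N‖ := norm_pos_iff.2 hN0
  have hdiv : ⟪N, ξ⟫ ^ 2 ≤ 4 * (⟪N, ξ⟫ ^ 2 / ‖N‖ ^ 2) := by
    rw [← mul_div_assoc, le_div_iff₀ (by positivity), mul_comm]
    have : ‖N‖ ^ 2 ≤ 4 := by nlinarith
    gcongr
  have e1 := mul_le_mul_of_nonneg_left hasq (by positivity : 0 ≤ 2 * L)
  have e2 := mul_le_mul_of_nonneg_left hdiv (by positivity : 0 ≤ 4 * L)
  rw [mul_div_assoc]
  linarith

variable [CompleteSpace F]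

theorem ContDiffAt.gradient {σ : F → ℝ} {x : F} (hσ : ContDiffAt ℝ (⊤ : ℕ∞) σ x) :
    ContDiffAt ℝ (⊤ : ℕ∞) (gradient σ) x := by
  have h : ContDiffAt ℝ (⊤ : ℕ∞) (fderiv ℝ σ) x := hσ.fderiv_right (by simp)
  exact (InnerProductSpace.toDual ℝ F).symm.contDiff.contDiffAt.comp x h

theorem hess_eq_inner {σ : F → ℝ} {x : F} (hσ : ContDiffAt ℝ (⊤ : ℕ∞) σ x) (u v : F) :
    Hess σ x u v = ⟪fderiv ℝ (gradient σ) x u, v⟫ := by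
  have hG : DifferentiableAt ℝ (gradient σ) x := hσ.gradient.differentiableAt (by simp)
  have h : (fun y => fderiv ℝ σ y v) = fun y => ⟪gradient σ y, v⟫ :=
    funext fun y => inner_gradient_left.symm
  rw [Hess, h, fderiv_inner_apply ℝ hG (differentiableAt_const v)]
  simp

theorem inner_fderiv_gradient_comm {σ : F → ℝ} {x : F} (hσ : ContDiffAt ℝ (⊤ : ℕ∞) σ x)
    (u v : F) :
    ⟪fderiv ℝ (gradient σ) x u, v⟫ = ⟪fderiv ℝ (gradient σ) x v, u⟫ := by
  have hD : DifferentiableAt ℝ (fderiv ℝ σ) x :=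
    (hσ.fderiv_right (m := (⊤ : ℕ∞)) (by simp)).differentiableAt (by simp)
  have hsymm := hσ.isSymmSndFDerivAt minSmoothness_two_le_infty u v
  have key : ∀ a b : F, Hess σ x a b = fderiv ℝ (fderiv ℝ σ) x a b := fun a b => by
    rw [Hess, fderiv_clm_apply hD (differentiableAt_const b)]
    simp
  rw [← hess_eq_inner hσ, ← hess_eq_inner hσ, key, key, hsymm]

/-- A function vanishing on a regular level set has vanishing derivative in tangent directions. -/
theorem fderiv_eq_zero_of_eqOn_levelSet {X : Type*} [NormedAddCommGroup X] [NormedSpace ℝ X]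
    {σ : F → ℝ} {f : F → X} {y τ : F} (hσ : ContDiffAt ℝ (⊤ : ℕ∞) σ y)
    (hf : DifferentiableAt ℝ f y) (hy : gradient σ y ≠ 0) (hτ : ⟪gradient σ y, τ⟫ = 0)
    (h : ∀ᶠ z in 𝓝 y, σ z = σ y → f z = 0) : fderiv ℝ f y τ = 0 := by
  have hs : HasStrictFDerivAt σ (fderiv ℝ σ y) y := hσ.hasStrictFDerivAt (by simp)
  have hrange : (fderiv ℝ σ y).range = ⊤ := by
    apply LinearMap.range_eq_top.2
    apply LinearMap.surjective
    intro h0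
    apply hy
    have : fderiv ℝ σ y = 0 := by ext v; exact LinearMap.congr_fun h0 v
    simp [gradient, this]
  have hτ' : τ ∈ (fderiv ℝ σ y).ker := by
    rw [inner_gradient_left] at hτ
    exact hτ
  set ψ := hs.implicitFunction σ _ hrange (σ y) with hψ
  have hψ0 : ψ 0 = y := hs.implicitFunction_apply_image hrange
  have hψ' : HasFDerivAt ψ (fderiv ℝ σ y).ker.subtypeL 0 :=
    (hs.to_implicitFunction hrange).hasFDerivAt
  let l : ℝ → (fderiv ℝ σ y).ker := fun s => s • ⟨τ, hτ'⟩
  have hl : HasDerivAt l ⟨τ, hτ'⟩ 0 := by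
    have := (hasDerivAt_id (0 : ℝ)).smul_const (⟨τ, hτ'⟩ : (fderiv ℝ σ y).ker)
    rwa [one_smul] at this
  have hl0 : l 0 = 0 := by simp [l]
  have hg : HasDerivAt (ψ ∘ l) τ 0 := by
    rw [← hl0] at hψ'
    exact hψ'.comp_hasDerivAt 0 hl
  have hg0 : (ψ ∘ l) 0 = y := by simp [hl0, hψ0]
  have hfg : HasDerivAt (f ∘ (ψ ∘ l)) (fderiv ℝ f y τ) 0 := by
    have := hf.hasFDerivAt
    rw [← hg0] at this
    have := this.comp_hasDerivAt 0 hg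
    rwa [hg0] at this
  have hlev : ∀ᶠ s in 𝓝 (0 : ℝ), σ ((ψ ∘ l) s) = σ y := by
    have h1 := hs.map_implicitFunction_eq hrange
    have h2 : Tendsto (fun s => (σ y, l s)) (𝓝 0) (𝓝 (σ y, 0)) := by
      have := hl.continuousAt.tendsto
      rw [hl0] at this
      exact tendsto_const_nhds.prodMk_nhds this
    exact h2.eventually h1
  have hz : (f ∘ (ψ ∘ l)) =ᶠ[𝓝 0] fun _ => 0 := by
    have h3 := hg.continuousAt.tendsto
    rw [hg0] at h3
    filter_upwards [h3.eventually h, hlev] with s hs1 hs2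
    exact hs1 hs2
  exact (hfg.congr_of_eventuallyEq hz.symm).unique (hasDerivAt_const _ _)

/-- If `‖∇σ‖ = 1` on the level set, then `∇σ` is an eigenvector of the Hessian there. -/
theorem fderiv_gradient_apply_gradient {σ : F → ℝ} {y : F} (hσ : ContDiffAt ℝ (⊤ : ℕ∞) σ y)
    (hy : ‖gradient σ y‖ = 1) (h : ∀ᶠ z in 𝓝 y, σ z = σ y → ‖gradient σ z‖ = 1) :
    fderiv ℝ (gradient σ) y (gradient σ y) =
      ⟪fderiv ℝ (gradient σ) y (gradient σ y), gradient σ y⟫ • gradient σ y := by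
  apply eq_inner_smul_of_forall_inner_eq_zero hy
  intro τ hτ
  have hG : DifferentiableAt ℝ (gradient σ) y := hσ.gradient.differentiableAt (by simp)
  have h0 : fderiv ℝ (fun z => ⟪gradient σ z, gradient σ z⟫ - 1) y τ = 0 := by
    apply fderiv_eq_zero_of_eqOn_levelSet hσ ((hG.inner ℝ hG).sub_const 1) _ hτ
    · filter_upwards [h] with z hz hzy
      rw [real_inner_self_eq_norm_sq, hz hzy]
      norm_num
    · intro h0
      simp [h0] at hy
  rw [fderiv_sub_const, fderiv_inner_apply ℝ hG hG, real_inner_comm] at h0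
  rw [inner_fderiv_gradient_comm hσ]
  linarith

/-- The normal derivative of the tangential Hessian on a level set where `‖∇σ‖ = 1`. -/
theorem inner_fderiv_fderiv_gradient {σ : F → ℝ} {y τ : F}
    (hσ : ∀ᶠ z in 𝓝 y, ContDiffAt ℝ (⊤ : ℕ∞) σ z)
    (h : ∀ᶠ z in 𝓝 y, σ z = σ y → ‖gradient σ z‖ = 1) (hτ : ⟪gradient σ y, τ⟫ = 0) :
    ⟪fderiv ℝ (fderiv ℝ (gradient σ)) y (gradient σ y) τ, τ⟫ =
      ⟪fderiv ℝ (gradient σ) y (gradient σ y), gradient σ y⟫ * ⟪fderiv ℝ (gradient σ) y τ, τ⟫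
        - ‖fderiv ℝ (gradient σ) y τ‖ ^ 2 := by
  have hy : ‖gradient σ y‖ = 1 := h.self_of_nhds rfl
  have hσy := hσ.self_of_nhds
  have hGs := hσy.gradient
  have hG : DifferentiableAt ℝ (gradient σ) y := hGs.differentiableAt (by simp)
  have hA : DifferentiableAt ℝ (fderiv ℝ (gradient σ)) y :=
    (hGs.fderiv_right (m := (⊤ : ℕ∞)) (by simp)).differentiableAt (by simp)
  have hAG : DifferentiableAt ℝ (fun z => fderiv ℝ (gradient σ) z (gradient σ z)) y :=
    hA.clm_apply hG
  have hκ := hAG.inner ℝ hG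
  have h0 : fderiv ℝ (fun z => fderiv ℝ (gradient σ) z (gradient σ z) -
      ⟪fderiv ℝ (gradient σ) z (gradient σ z), gradient σ z⟫ • gradient σ z) y τ = 0 := by
    apply fderiv_eq_zero_of_eqOn_levelSet hσy (hAG.fun_sub (hκ.fun_smul hG)) _ hτ
    · filter_upwards [h.eventually_nhds, hσ] with z hz hσz hzy
      rw [← hzy] at hz
      rw [sub_eq_zero]
      exact fderiv_gradient_apply_gradient hσz (hz.self_of_nhds rfl) hz
    · intro h0
      simp [h0] at hy
  have hsymm := hGs.isSymmSndFDerivAt minSmoothness_two_le_infty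
    τ (gradient σ y)
  have h1 := congrArg (fun w => ⟪w, τ⟫) h0
  rw [fderiv_fun_sub hAG (hκ.fun_smul hG), fderiv_fun_smul hκ hG, fderiv_clm_apply hA hG] at h1
  simp only [sub_apply, add_apply,
    smul_apply, ContinuousLinearMap.smulRight_apply,
    ContinuousLinearMap.comp_apply, ContinuousLinearMap.flip_apply, inner_sub_left,
    inner_add_left, inner_smul_left, hτ, inner_zero_left, hsymm,
    inner_fderiv_gradient_comm hσy (fderiv ℝ (gradient σ) y τ) τ,
    real_inner_self_eq_norm_sq, RCLike.conj_to_real] at h1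
  linarith

theorem exists_zero_along_gradient {σ : F → ℝ} {p x : F} {r : ℝ}
    (hd : ∀ z ∈ ball p r, DifferentiableAt ℝ σ z)
    (hin : ∀ z ∈ ball p r, ∀ w ∈ ball p r, 1 / 2 ≤ ⟪gradient σ z, gradient σ w⟫)
    (hn : ∀ z ∈ ball p r, ‖gradient σ z‖ ≤ 2) (hx : dist x p + 4 * |σ x| < r) :
    ∃ s : ℝ, |s| ≤ 2 * |σ x| ∧ x + s • gradient σ x ∈ ball p r ∧ σ (x + s • gradient σ x) = 0 := by
  have hxr : x ∈ ball p r := by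
    rw [mem_ball]
    linarith [abs_nonneg (σ x)]
  set m := 2 * |σ x| with hm
  have hm0 : 0 ≤ m := by positivity
  have hball : ∀ s ∈ Set.Icc (-m) m, x + s • gradient σ x ∈ ball p r := by
    intro s hs
    have hs' : |s| ≤ m := abs_le.2 hs
    have h1 : ‖s • gradient σ x‖ ≤ m * 2 := by
      rw [norm_smul, Real.norm_eq_abs]
      exact mul_le_mul hs' (hn x hxr) (norm_nonneg _) hm0
    rw [mem_ball]
    calc dist (x + s • gradient σ x) p ≤ dist (x + s • gradient σ x) x + dist x p :=
          dist_triangle _ _ _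
      _ < r := by rw [dist_eq_norm, add_sub_cancel_left]; linarith
  have hderiv : ∀ s ∈ Set.Icc (-m) m, HasDerivAt (fun s : ℝ => σ (x + s • gradient σ x))
      ⟪gradient σ (x + s • gradient σ x), gradient σ x⟫ s := by
    intro s hs
    have h1 : HasDerivAt (fun s : ℝ => x + s • gradient σ x) (gradient σ x) s := by
      simpa using ((hasDerivAt_id s).smul_const (gradient σ x)).const_add x
    rw [inner_gradient_left]
    exact (hd _ (hball s hs)).hasFDerivAt.comp_hasDerivAt s h1
  have hcont : ContinuousOn (fun s : ℝ => σ (x + s • gradient σ x)) (Set.Icc (-m) m) :=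
    fun s hs => (hderiv s hs).continuousAt.continuousWithinAt
  have hgrow := (convex_Icc (-m) m).mul_sub_le_image_sub_of_le_deriv hcont (C := 1 / 2)
    (fun s hs => (hderiv s (interior_subset hs)).differentiableAt.differentiableWithinAt)
    (fun s hs => by
      rw [(hderiv s (interior_subset hs)).deriv]
      exact hin _ (hball s (interior_subset hs)) _ hxr)
  have h0 : (0 : ℝ) ∈ Set.Icc (-m) m := ⟨by linarith, hm0⟩
  have hr := hgrow 0 h0 m ⟨by linarith, le_rfl⟩ hm0
  have hl := hgrow (-m) ⟨le_rfl, by linarith⟩ 0 h0 (by linarith)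
  simp only [zero_smul, add_zero] at hr hl
  obtain ⟨s, hs, hs0⟩ := intermediate_value_Icc (by linarith : -m ≤ m) hcont
    (show (0 : ℝ) ∈ _ from ⟨by linarith [le_abs_self (σ x)], by linarith [neg_abs_le (σ x)]⟩)
  exact ⟨s, abs_le.2 hs, hball s hs, hs0⟩

theorem mem_frontier_of_eq_zero {Ω U : Set F} {σ : F → ℝ} {y : F} (hΩ : IsOpen Ω) (hU : IsOpen U)
    (hdef : Ω ∩ U = {x ∈ U | σ x < 0}) (hy : y ∈ U) (hσy : σ y = 0) (hG : gradient σ y ≠ 0) :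
    y ∈ frontier Ω := by
  rw [hΩ.frontier_eq]
  refine ⟨?_, fun hyΩ => ?_⟩
  · by_contra hc
    apply hG
    have hmin : IsLocalMin σ y := by
      filter_upwards [isClosed_closure.isOpen_compl.mem_nhds hc, hU.mem_nhds hy] with z hz hzU
      rw [hσy]
      by_contra! hneg
      have : z ∈ Ω ∩ U := by
        rw [hdef]
        exact ⟨hzU, hneg⟩
      exact hz (subset_closure this.1)
    rw [gradient, hmin.fderiv_eq_zero, map_zero]
  · have : y ∈ {x ∈ U | σ x < 0} := hdef ▸ ⟨hyΩ, hy⟩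
    exact this.2.ne hσy

/-- The Hessian estimate at a point `x`, with explicit constants depending only on local bounds
for `∇σ` and its first two derivatives. -/
theorem hess_lower_bound {σ : F → ℝ} {p x : F} {r L : ℝ} (hL : 1 ≤ L)
    (hσ : ∀ z ∈ ball p r, ContDiffAt ℝ (⊤ : ℕ∞) σ z)
    (hgrad : ∀ z ∈ ball p r, σ z = 0 → ‖gradient σ z‖ = 1)
    (hconv : ∀ z ∈ ball p r, σ z = 0 → ∀ τ : F, ⟪gradient σ z, τ⟫ = 0 → 0 ≤ Hess σ z τ τ)
    (hin : ∀ z ∈ ball p r, ∀ w ∈ ball p r, 1 / 2 ≤ ⟪gradient σ z, gradient σ w⟫)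
    (hn : ∀ z ∈ ball p r, ‖gradient σ z‖ ≤ 2)
    (hG : ∀ z ∈ ball p r, ∀ w ∈ ball p r, ‖gradient σ z - gradient σ w‖ ≤ L * ‖z - w‖)
    (hA : ∀ z ∈ ball p r, ∀ w ∈ ball p r,
      ‖fderiv ℝ (gradient σ) z - fderiv ℝ (gradient σ) w‖ ≤ L * ‖z - w‖)
    (hD : ∀ z ∈ ball p r, ∀ w ∈ ball p r,
      ‖fderiv ℝ (fderiv ℝ (gradient σ)) z - fderiv ℝ (fderiv ℝ (gradient σ)) w‖ ≤ L * ‖z - w‖)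
    (hAL : ∀ z ∈ ball p r, ‖fderiv ℝ (gradient σ) z‖ ≤ L)
    (hDL : ∀ z ∈ ball p r, ‖fderiv ℝ (fderiv ℝ (gradient σ)) z‖ ≤ L)
    (hx : dist x p + 4 * |σ x| < r) (hsmall : 4 * L * |σ x| ≤ 1) (ξ : F) :
    -((2 * (24 * L ^ 2) + 4 * (24 * L ^ 2) ^ 3) * (σ x) ^ 2 * ‖ξ‖ ^ 2)
      - 16 * (24 * L ^ 2) * ⟪gradient σ x, ξ⟫ ^ 2 / ‖gradient σ x‖ ^ 2 ≤ Hess σ x ξ ξ := by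
  have hxr : x ∈ ball p r := by
    rw [mem_ball]
    linarith [abs_nonneg (σ x)]
  obtain ⟨s, hs, hyr, hy0⟩ := exists_zero_along_gradient
    (fun z hz => (hσ z hz).differentiableAt (by simp)) hin hn hx
  set y := x + s • gradient σ x with hy
  set δ := |σ x| with hδ
  have hδ0 : 0 ≤ δ := abs_nonneg _
  have hxy : x - y = -s • gradient σ x := by
    rw [hy, neg_smul]
    abel
  have hxyn : ‖x - y‖ ≤ 4 * δ := by
    rw [hxy, norm_smul, norm_neg, Real.norm_eq_abs]
    calc |s| * ‖gradient σ x‖ ≤ (2 * δ) * 2 := by gcongr; exact hn x hxr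
      _ = 4 * δ := by ring
  have hnhds : ∀ᶠ z in 𝓝 y, z ∈ ball p r := isOpen_ball.mem_nhds hyr
  have hlev : ∀ᶠ z in 𝓝 y, σ z = σ y → ‖gradient σ z‖ = 1 := by
    filter_upwards [hnhds] with z hz hzy
    exact hgrad z hz (hzy.trans hy0)
  have hu := hgrad y hyr hy0
  have heig := fderiv_gradient_apply_gradient (hσ y hyr) hu hlev
  have hsymm := inner_fderiv_gradient_comm (hσ y hyr)
  have hpos : ∀ v : F, ⟪gradient σ y, v⟫ = 0 → 0 ≤ ⟪fderiv ℝ (gradient σ) y v, v⟫ := by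
    intro v hv
    rw [← hess_eq_inner (hσ y hyr)]
    exact hconv y hyr hy0 v hv
  have hκ := abs_inner_apply_le (hAL y hyr) (gradient σ y) (gradient σ y)
  rw [hu, mul_one, mul_one] at hκ
  have hL2 : L ≤ L ^ 2 := by nlinarith
  rw [hess_eq_inner (hσ x hxr), ← sq_abs (σ x), ← hδ]
  refine quadratic_form_lower_bound (A₀ := fderiv ℝ (gradient σ) y) (u := gradient σ y)
    (B := fderiv ℝ (gradient σ) y + -s • fderiv ℝ (fderiv ℝ (gradient σ)) y (gradient σ y))
    (by positivity) hu hsymm heig ?_ ?_ ?_ ?_ ?_ ?_ (hn x hxr)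
  · intro τ hτ
    have hq := hpos τ hτ
    have hN := norm_sq_apply_le_of_nonneg_on_orthogonal hsymm heig hpos (hAL y hyr)
      (by linarith) hτ
    have hD3 := inner_fderiv_fderiv_gradient (hnhds.mono hσ) hlev hτ
    rw [add_apply, smul_apply, inner_add_left, inner_smul_left, hD3, RCLike.conj_to_real]
    set q := ⟪fderiv ℝ (gradient σ) y τ, τ⟫
    set κ := ⟪fderiv ℝ (gradient σ) y (gradient σ y), gradient σ y⟫
    set P := ‖fderiv ℝ (gradient σ) y τ‖ ^ 2
    have hP : 0 ≤ P := by positivity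
    have h1 : |κ * q - P| ≤ 2 * L * q := by
      have h2 : |κ * q| ≤ L * q := by
        rw [abs_mul, abs_of_nonneg hq]
        gcongr
      have h3 := abs_sub (κ * q) P
      rw [abs_of_nonneg hP] at h3
      linarith
    have h4 : |-s * (κ * q - P)| ≤ q := by
      rw [abs_mul, abs_neg]
      calc |s| * |κ * q - P| ≤ (2 * δ) * (2 * L * q) := by gcongr
        _ = (4 * L * δ) * q := by ring
        _ ≤ 1 * q := by gcongr
        _ = q := one_mul q
    linarith [neg_abs_le (-s * (κ * q - P))]
  · have hsplit : fderiv ℝ (gradient σ) x - (fderiv ℝ (gradient σ) y +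
        -s • fderiv ℝ (fderiv ℝ (gradient σ)) y (gradient σ y)) =
        (fderiv ℝ (gradient σ) x - fderiv ℝ (gradient σ) y -
          fderiv ℝ (fderiv ℝ (gradient σ)) y (x - y)) +
        fderiv ℝ (fderiv ℝ (gradient σ)) y (-s • (gradient σ x - gradient σ y)) := by
      rw [hxy, map_smul, map_smul, map_sub, smul_sub]
      abel
    have hT := norm_sub_sub_fderiv_le (f := fderiv ℝ (gradient σ))
      (fun z hz => ((hσ z hz).gradient.fderiv_right (m := (⊤ : ℕ∞)) (by simp)).differentiableAt
        (by simp)) (by linarith) hD hxr hyr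
    have hR : ‖fderiv ℝ (fderiv ℝ (gradient σ)) y (-s • (gradient σ x - gradient σ y))‖ ≤
        L * ((2 * δ) * (L * (4 * δ))) := by
      refine (ContinuousLinearMap.le_of_opNorm_le _ (hDL y hyr) _).trans ?_
      rw [norm_smul, norm_neg, Real.norm_eq_abs]
      have := hG x hxr y hyr
      gcongr
      exact this.trans (by gcongr)
    rw [hsplit]
    calc _ ≤ L * ‖x - y‖ ^ 2 + L * ((2 * δ) * (L * (4 * δ))) :=
          (norm_add_le _ _).trans (add_le_add hT hR)
      _ ≤ L * (4 * δ) ^ 2 + L * ((2 * δ) * (L * (4 * δ))) := by gcongr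
      _ = (16 * L + 8 * L ^ 2) * δ ^ 2 := by ring
      _ ≤ (24 * L ^ 2) * δ ^ 2 := by gcongr; linarith
  · calc _ ≤ L * ‖x - y‖ := hA x hxr y hyr
      _ ≤ L * (4 * δ) := by gcongr
      _ = (4 * L) * δ := by ring
      _ ≤ _ := by gcongr; linarith
  · linarith [hAL x hxr]
  · calc _ ≤ L * ‖x - y‖ := hG x hxr y hyr
      _ ≤ L * (4 * δ) := by gcongr
      _ = (4 * L) * δ := by ring
      _ ≤ _ := by gcongr; linarith
  · intro h0
    have := hin x hxr x hxr
    rw [h0, inner_zero_left] at this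
    norm_num at this

end

/-- for a convex domain and a defining function `σ` with unit gradient on
the boundary, the Hessian of `σ` near a boundary point `p` is bounded below by
`−C₁σ²‖ξ‖² − C₂|⟨∇σ,ξ⟩|²/‖∇σ‖²`. -/
theorem quadratic_negativity_estimate
    {n : ℕ} (Ω U : Set (E n)) (hΩ : IsOpen Ω) (hU : IsOpen U)
    (p : E n) (hp : p ∈ frontier Ω) (hpU : p ∈ U)
    (σ : E n → ℝ) (hσ : ContDiffOn ℝ (⊤ : ℕ∞) σ U)
    (hdef : Ω ∩ U = {x ∈ U | σ x < 0})
    (hgrad : ∀ y ∈ frontier Ω ∩ U, ‖gradient σ y‖ = 1)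
    (hconv : ∀ y ∈ frontier Ω ∩ U, ∀ τ : E n, ⟪gradient σ y, τ⟫ = 0 →
      0 ≤ Hess σ y τ τ) :
    ∃ V ⊆ U, IsOpen V ∧ p ∈ V ∧ ∃ C₁ > (0:ℝ), ∃ C₂ > (0:ℝ), ∀ x ∈ V, ∀ ξ : E n,
      -(C₁ * (σ x) ^ 2 * ‖ξ‖ ^ 2)
        - C₂ * ⟪gradient σ x, ξ⟫ ^ 2 / ‖gradient σ x‖ ^ 2 ≤ Hess σ x ξ ξ := by
  have hσU : ∀ z ∈ U, ContDiffAt ℝ (⊤ : ℕ∞) σ z := fun z hz => hσ.contDiffAt (hU.mem_nhds hz)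
  have hσp := hσU p hpU
  have hGs := hσp.gradient
  have hAs : ContDiffAt ℝ (⊤ : ℕ∞) (fderiv ℝ (gradient σ)) p := hGs.fderiv_right (by simp)
  have hDs : ContDiffAt ℝ (⊤ : ℕ∞) (fderiv ℝ (fderiv ℝ (gradient σ))) p :=
    hAs.fderiv_right (by simp)
  have hp0 := eq_zero_of_mem_frontier_s17 hΩ hU hdef hpU hp hσp.continuousAt
  have hp1 := hgrad p ⟨hp, hpU⟩
  obtain ⟨K₁, t₁, ht₁, hG, -⟩ := hGs.exists_lipschitz_bound
  obtain ⟨K₂, t₂, ht₂, hA, hAL⟩ := hAs.exists_lipschitz_bound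
  obtain ⟨K₃, t₃, ht₃, hD, hDL⟩ := hDs.exists_lipschitz_bound
  have hclose : ∀ᶠ z in 𝓝 p, ‖gradient σ z - gradient σ p‖ < 1 / 8 := by
    have := hGs.continuousAt.eventually (ball_mem_nhds (gradient σ p) (by norm_num : (0 : ℝ) < 1 / 8))
    simpa [dist_eq_norm] using this
  obtain ⟨r, hr, hball⟩ := Metric.mem_nhds_iff.1
    (inter_mem (inter_mem (inter_mem ht₁ ht₂) (inter_mem ht₃ (hU.mem_nhds hpU))) hclose)
  set L := max 1 (max K₁ (max K₂ K₃)) with hLdef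
  have hL : 1 ≤ L := le_max_left _ _
  have hK₁ : K₁ ≤ L := (le_max_left _ _).trans (le_max_right _ _)
  have hK₂ : K₂ ≤ L :=
    (le_max_left _ _).trans ((le_max_right _ _).trans (le_max_right _ _))
  have hK₃ : K₃ ≤ L :=
    (le_max_right _ _).trans ((le_max_right _ _).trans (le_max_right _ _))
  have hin : ∀ z ∈ ball p r, ∀ w ∈ ball p r, 1 / 2 ≤ ⟪gradient σ z, gradient σ w⟫ := by
    intro z hz w hw
    have hz' : ‖gradient σ z - gradient σ p‖ < 1 / 8 := (hball hz).2
    have hw' : ‖gradient σ w - gradient σ p‖ < 1 / 8 := (hball hw).2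
    have h1 := neg_le_of_abs_le (abs_real_inner_le_norm (gradient σ z - gradient σ p)
      (gradient σ w - gradient σ p))
    have h2 := neg_le_of_abs_le (abs_real_inner_le_norm (gradient σ z - gradient σ p)
      (gradient σ p))
    have h3 := neg_le_of_abs_le (abs_real_inner_le_norm (gradient σ p)
      (gradient σ w - gradient σ p))
    have h4 : ‖gradient σ z - gradient σ p‖ * ‖gradient σ w - gradient σ p‖ ≤ 1 / 8 * (1 / 8) := by
      gcongr
    rw [hp1] at h2 h3
    simp only [inner_sub_left, inner_sub_right] at h1 h2 h3
    rw [real_inner_self_eq_norm_sq, hp1] at h1 h2 h3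
    linarith
  have hn : ∀ z ∈ ball p r, ‖gradient σ z‖ ≤ 2 := by
    intro z hz
    have hz' : ‖gradient σ z - gradient σ p‖ < 1 / 8 := (hball hz).2
    linarith [norm_le_norm_add_norm_sub' (gradient σ z) (gradient σ p)]
  have hfr : ∀ z ∈ ball p r, σ z = 0 → z ∈ frontier Ω ∩ U := by
    intro z hz hz0
    have hzU : z ∈ U := (hball hz).1.2.2
    refine ⟨mem_frontier_of_eq_zero hΩ hU hdef hzU hz0 fun h0 => ?_, hzU⟩
    have := hin z hz z hz
    rw [h0, inner_zero_left] at this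
    norm_num at this
  have hsmall : ∀ᶠ x in 𝓝 p, dist x p + 4 * |σ x| < r ∧ 4 * L * |σ x| < 1 := by
    have hc := hσp.continuousAt
    have h1 : ContinuousAt (fun x => dist x p + 4 * |σ x|) p :=
      (continuousAt_id.dist continuousAt_const).add (continuousAt_const.mul hc.abs)
    have h2 : ContinuousAt (fun x => 4 * L * |σ x|) p := continuousAt_const.mul hc.abs
    exact (h1.eventually (gt_mem_nhds (by simpa [hp0] using hr))).and
      (h2.eventually (gt_mem_nhds (by simp [hp0])))
  obtain ⟨V, hV, hVo, hpV⟩ := _root_.mem_nhds_iff.1 (inter_mem hsmall (hU.mem_nhds hpU))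
  refine ⟨V, fun x hx => (hV hx).2, hVo, hpV, 2 * (24 * L ^ 2) + 4 * (24 * L ^ 2) ^ 3,
    by positivity, 16 * (24 * L ^ 2), by positivity, fun x hx ξ => ?_⟩
  refine hess_lower_bound hL (fun z hz => hσU z (hball hz).1.2.2)
    (fun z hz hz0 => hgrad z (hfr z hz hz0)) (fun z hz hz0 => hconv z (hfr z hz hz0)) hin hn
    ?_ ?_ ?_ (fun z hz => (hAL z (hball hz).1.1.2).trans hK₂)
    (fun z hz => (hDL z (hball hz).1.2.1).trans hK₃) (hV hx).1.1 (hV hx).1.2.le ξ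
  · exact fun z hz w hw => (hG z (hball hz).1.1.1 w (hball hw).1.1.1).trans (by gcongr)
  · exact fun z hz w hw => (hA z (hball hz).1.1.2 w (hball hw).1.1.2).trans (by gcongr)
  · exact fun z hz w hw => (hD z (hball hz).1.2.1 w (hball hw).1.2.1).trans (by gcongr)
end
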